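/- Let V : R^n → R be a 1-Lipschitz function and Z a standard Gaussian vector in R^n. Then for every t ≥ 0, P(V(Z) ≥ E[V(Z)] + t) ≤ exp(−t²/2). -/

import Mathlib

open MeasureTheory ProbabilityTheory

/-!
For weights `a + b = 1`, the Prékopa–Leindler inequality on `ℝ` shows that the standard Gaussian
measure `γ` satisfies property (τ) with cost `(a b / 2) d(x, y)²`: if
`f(x)^a g(y)^b ≤ exp ((a b / 2) d(x, y)²)` everywhere, then `(∫ f dγ)^a (∫ g dγ)^b ≤ 1`.
Property (τ) tensorises, and the squared Euclidean distance is additive over coordinates, so the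
same holds in every dimension. For a centred `K`-Lipschitz function `V`, the test functions
`exp (-(b / a) l V)` and `exp (l V - K² l² / (2 a))` are admissible; the integral of the first is
at least `1` by Jensen's inequality, hence `∫ exp (l V) dγ ≤ exp (K² l² / (2 a))`.
Letting `a → 1` gives the sharp sub-Gaussian bound, and Chernoff's inequality concludes.
-/

open Set Filter
open scoped ENNReal NNReal Pointwise Topology

section PrekopaLeindler

theorem volume_add_volume_le_volume_add_of_isCompact {K L : Set ℝ} (hK : IsCompact K)
    (hL : IsCompact L) (hK₀ : K.Nonempty) (hL₀ : L.Nonempty) :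
    volume K + volume L ≤ volume (K + L) := by
  -- The translates of `K` by `min L` and of `L` by `max K` meet in at most one point.
  have hdisj : AEDisjoint volume ((· + sInf L) '' K) ((sSup K + ·) '' L) := by
    refine measure_mono_null (t := {sSup K + sInf L}) ?_ (measure_singleton _)
    rintro _ ⟨⟨x, hx, rfl⟩, y, hy, hxy⟩
    have hx_le : x ≤ sSup K := le_csSup hK.bddAbove hx
    have hle_y : sInf L ≤ y := csInf_le hL.bddBelow hy
    simp only [mem_singleton_iff] at hxy ⊢
    linarith
  have hmeas : NullMeasurableSet ((sSup K + ·) '' L) :=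
    (hL.image (by fun_prop)).measurableSet.nullMeasurableSet
  calc volume K + volume L
      = volume ((· + sInf L) '' K) + volume ((sSup K + ·) '' L) := by
        simp only [image_add_right, measure_preimage_add_right, image_add_left,
          measure_preimage_add]
    _ = volume ((· + sInf L) '' K ∪ (sSup K + ·) '' L) := (measure_union₀ hmeas hdisj).symm
    _ ≤ volume (K + L) := by
        refine measure_mono (union_subset ?_ ?_)
        · exact image_subset_iff.2 fun x hx => add_mem_add hx (hL.sInf_mem hL₀)
        · exact image_subset_iff.2 fun y hy => add_mem_add (hK.sSup_mem hK₀) hy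

theorem measure_le_iSup_nonempty_isCompact {X : Type*} [TopologicalSpace X] [MeasurableSpace X]
    {μ : Measure X} [μ.InnerRegular] {A : Set X} (hA : MeasurableSet A) :
    μ A ≤ ⨆ K : {K : Set X // IsCompact K ∧ K.Nonempty ∧ K ⊆ A}, μ K.1 := by
  refine le_of_forall_lt fun r hr => ?_
  obtain ⟨K, hKA, hK, hrK⟩ := hA.exists_lt_isCompact hr
  exact hrK.trans_le (le_iSup_of_le
    ⟨K, hK, nonempty_of_measure_ne_zero (pos_of_gt hrK).ne', hKA⟩ le_rfl)

theorem volume_add_volume_le_volume_add {A B : Set ℝ} (hA : MeasurableSet A)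
    (hB : MeasurableSet B) (hA₀ : A.Nonempty) (hB₀ : B.Nonempty) :
    volume A + volume B ≤ volume (A + B) := by
  have nonempty_compacts {D : Set ℝ} : D.Nonempty →
      Nonempty {K : Set ℝ // IsCompact K ∧ K.Nonempty ∧ K ⊆ D} := fun ⟨x, hx⟩ =>
    ⟨{x}, isCompact_singleton, singleton_nonempty x, singleton_subset_iff.2 hx⟩
  have := nonempty_compacts hA₀
  have := nonempty_compacts hB₀
  calc volume A + volume B
      ≤ (⨆ K : {K : Set ℝ // IsCompact K ∧ K.Nonempty ∧ K ⊆ A}, volume K.1) +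
          ⨆ L : {L : Set ℝ // IsCompact L ∧ L.Nonempty ∧ L ⊆ B}, volume L.1 :=
        add_le_add (measure_le_iSup_nonempty_isCompact hA) (measure_le_iSup_nonempty_isCompact hB)
    _ ≤ volume (A + B) := by
        refine ENNReal.iSup_add_iSup_le fun ⟨K, hK, hK₀, hKA⟩ ⟨L, hL, hL₀, hLB⟩ => ?_
        exact (volume_add_volume_le_volume_add_of_isCompact hK hL hK₀ hL₀).trans
          (measure_mono (add_subset_add hKA hLB))

theorem volume_Ioi_inter_ofReal_lt (y : ℝ≥0∞) :
    volume (Ioi 0 ∩ {t | ENNReal.ofReal t < y}) = y := by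
  induction y with
  | top => simp
  | coe y =>
    have : Ioi 0 ∩ {t | ENNReal.ofReal t < y} = Ioo 0 (y : ℝ) := by
      ext t
      simp only [mem_inter_iff, mem_Ioi, mem_ofPred_eq, mem_Ioo, and_congr_right_iff]
      exact fun ht => ENNReal.ofReal_lt_coe_iff ht.le
    simp [this]

theorem lintegral_eq_lintegral_measure_ofReal_lt {X : Type*} [MeasurableSpace X] {μ : Measure X}
    [SFinite μ] {f : X → ℝ≥0∞} (hf : Measurable f) :
    ∫⁻ x, f x ∂μ = ∫⁻ t in Ioi (0 : ℝ), μ {x | ENNReal.ofReal t < f x} := by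
  have measurableSet_hypograph : MeasurableSet {p : X × ℝ | ENNReal.ofReal p.2 < f p.1} :=
    measurableSet_lt (by fun_prop) (by fun_prop)
  calc ∫⁻ x, f x ∂μ
      = ∫⁻ x, volume.restrict (Ioi 0) {t | ENNReal.ofReal t < f x} ∂μ := by
        refine lintegral_congr fun x => ?_
        rw [Measure.restrict_apply' measurableSet_Ioi, inter_comm, volume_Ioi_inter_ofReal_lt]
    _ = (μ.prod (volume.restrict (Ioi 0))) {p | ENNReal.ofReal p.2 < f p.1} :=
        (Measure.prod_apply measurableSet_hypograph).symm
    _ = ∫⁻ t in Ioi (0 : ℝ), μ {x | ENNReal.ofReal t < f x} :=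
        Measure.prod_apply_symm measurableSet_hypograph

theorem min_le_rpow_mul_rpow {a b : ℝ} (ha : 0 ≤ a) (hb : 0 ≤ b) (hab : a + b = 1)
    (x y : ℝ≥0∞) : min x y ≤ x ^ a * y ^ b :=
  calc min x y = min x y ^ a * min x y ^ b := by
        rw [← ENNReal.rpow_add_of_nonneg _ _ ha hb, hab, ENNReal.rpow_one]
    _ ≤ x ^ a * y ^ b := by gcongr <;> simp

theorem rpow_mul_rpow_le_ofReal_mul_add_ofReal_mul {a b : ℝ} (ha : 0 < a) (hb : 0 < b)
    (hab : a + b = 1) (x y : ℝ≥0∞) :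
    x ^ a * y ^ b ≤ ENNReal.ofReal a * x + ENNReal.ofReal b * y := by
  simpa [← ENNReal.rpow_mul, ha, hb, ha.ne', hb.ne', ENNReal.ofReal_inv_of_pos,
    div_eq_mul_inv, mul_comm] using
    ENNReal.young_inequality (x ^ a) (y ^ b) (Real.HolderConjugate.inv_inv ha hb hab)

theorem lintegral_add_lintegral_le_of_min_le {a b : ℝ} (ha : 0 ≤ a) (hb : 0 ≤ b)
    {f g h : ℝ → ℝ≥0∞} (hf : Measurable f) (hg : Measurable g) (hh : Measurable h)
    (hsup : ⨆ x, f x = ⨆ x, g x) (hfg : ∀ x y, min (f x) (g y) ≤ h (a * x + b * y)) :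
    ENNReal.ofReal a * (∫⁻ x, f x) + ENNReal.ofReal b * (∫⁻ x, g x) ≤ ∫⁻ x, h x := by
  have level (t : ℝ) : ENNReal.ofReal a * volume {x | ENNReal.ofReal t < f x} +
      ENNReal.ofReal b * volume {x | ENNReal.ofReal t < g x} ≤
        volume {x | ENNReal.ofReal t < h x} := by
    have nonempty_iff : {x | ENNReal.ofReal t < f x}.Nonempty ↔
        {x | ENNReal.ofReal t < g x}.Nonempty := by
      simp only [nonempty_def, mem_ofPred_eq, ← lt_iSup_iff, hsup]
    rcases eq_empty_or_nonempty {x | ENNReal.ofReal t < f x} with hF | hF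
    · have hG := not_nonempty_iff_eq_empty.1 (nonempty_iff.not.1 (not_nonempty_iff_eq_empty.2 hF))
      simp [hF, hG]
    have hG := nonempty_iff.1 hF
    calc _ = volume (a • {x | ENNReal.ofReal t < f x}) +
            volume (b • {x | ENNReal.ofReal t < g x}) := by
          simp [Measure.addHaar_smul_of_nonneg, -Measure.addHaar_smul, ha, hb]
      _ ≤ volume (a • {x | ENNReal.ofReal t < f x} + b • {x | ENNReal.ofReal t < g x}) :=
          volume_add_volume_le_volume_add ((measurableSet_lt measurable_const hf).const_smul₀ a)
            ((measurableSet_lt measurable_const hg).const_smul₀ b) hF.smul_set hG.smul_set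
      _ ≤ volume {x | ENNReal.ofReal t < h x} := by
          refine measure_mono (add_subset_iff.2 ?_)
          rintro _ ⟨x, hx, rfl⟩ _ ⟨y, hy, rfl⟩
          exact (lt_min hx hy).trans_le (hfg x y)
  have measurable_level {u : ℝ → ℝ≥0∞} (c : ℝ) :
      Measurable fun t : ℝ => ENNReal.ofReal c * volume {x | ENNReal.ofReal t < u x} := by
    refine .const_mul (Antitone.measurable fun s t hst => measure_mono fun x hx => ?_) _
    exact (ENNReal.ofReal_le_ofReal hst).trans_lt hx
  simp only [lintegral_eq_lintegral_measure_ofReal_lt, hf, hg, hh]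
  rw [← lintegral_const_mul' _ _ ENNReal.ofReal_ne_top,
    ← lintegral_const_mul' _ _ ENNReal.ofReal_ne_top, ← lintegral_add_left (measurable_level a)]
  exact lintegral_mono level

theorem prekopa_leindler_real_of_le {a b : ℝ} (ha : 0 < a) (hb : 0 < b) (hab : a + b = 1)
    {f g h : ℝ → ℝ≥0∞} (hf : Measurable f) (hg : Measurable g) (hh : Measurable h)
    {M : ℝ≥0∞} (hM : M ≠ ∞) (hfM : ∀ x, f x ≤ M) (hgM : ∀ x, g x ≤ M)
    (hfg : ∀ x y, f x ^ a * g y ^ b ≤ h (a * x + b * y)) :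
    (∫⁻ x, f x) ^ a * (∫⁻ x, g x) ^ b ≤ ∫⁻ x, h x := by
  rcases eq_or_ne (⨆ x, f x) 0 with hS₀ | hS₀
  · simp [show f = 0 from funext (ENNReal.iSup_eq_zero.1 hS₀), ha]
  rcases eq_or_ne (⨆ x, g x) 0 with hT₀ | hT₀
  · simp [show g = 0 from funext (ENNReal.iSup_eq_zero.1 hT₀), hb]
  have hS : ⨆ x, f x ≠ ∞ := ne_top_of_le_ne_top hM (iSup_le hfM)
  have hT : ⨆ x, g x ≠ ∞ := ne_top_of_le_ne_top hM (iSup_le hgM)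
  set S := ⨆ x, f x
  set T := ⨆ x, g x
  have rpow_div_mul_rpow_div (p q : ℝ≥0∞) :
      (p / S) ^ a * (q / T) ^ b = p ^ a * q ^ b / (S ^ a * T ^ b) := by
    rw [ENNReal.div_rpow_of_nonneg _ _ ha.le, ENNReal.div_rpow_of_nonneg _ _ hb.le,
      ENNReal.mul_div_mul_comm (by simp [hS, hS₀]) (by simp [hS, hS₀])]
  have normalized : ENNReal.ofReal a * (∫⁻ x, f x / S) + ENNReal.ofReal b * (∫⁻ x, g x / T) ≤
      ∫⁻ x, h x / (S ^ a * T ^ b) := by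
    refine lintegral_add_lintegral_le_of_min_le ha.le hb.le (hf.div_const _) (hg.div_const _)
      (hh.div_const _) ?_ fun x y => ?_
    · rw [← ENNReal.iSup_div, ← ENNReal.iSup_div, ENNReal.div_self hS₀ hS, ENNReal.div_self hT₀ hT]
    · calc min (f x / S) (g y / T) ≤ (f x / S) ^ a * (g y / T) ^ b :=
            min_le_rpow_mul_rpow ha.le hb.le hab _ _
        _ = f x ^ a * g y ^ b / (S ^ a * T ^ b) := rpow_div_mul_rpow_div _ _
        _ ≤ h (a * x + b * y) / (S ^ a * T ^ b) := ENNReal.div_le_div_right (hfg x y) _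
  have divided : (∫⁻ x, f x) ^ a * (∫⁻ x, g x) ^ b / (S ^ a * T ^ b) ≤
      (∫⁻ x, h x) / (S ^ a * T ^ b) :=
    calc _ = (∫⁻ x, f x / S) ^ a * (∫⁻ x, g x / T) ^ b := by
          simp only [← rpow_div_mul_rpow_div, div_eq_mul_inv, lintegral_mul_const _ hf,
            lintegral_mul_const _ hg]
      _ ≤ ∫⁻ x, h x / (S ^ a * T ^ b) :=
          (rpow_mul_rpow_le_ofReal_mul_add_ofReal_mul ha hb hab _ _).trans normalized
      _ = (∫⁻ x, h x) / (S ^ a * T ^ b) := by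
          simp only [div_eq_mul_inv, lintegral_mul_const _ hh]
  have hST₀ : S ^ a * T ^ b ≠ 0 := by simp [hS₀, hT₀, hS, hT]
  have hST : S ^ a * T ^ b ≠ ∞ := by finiteness
  rwa [ENNReal.div_le_iff hST₀ hST, ENNReal.div_mul_cancel hST₀ hST] at divided

theorem prekopa_leindler_real {a b : ℝ} (ha : 0 < a) (hb : 0 < b) (hab : a + b = 1)
    {f g h : ℝ → ℝ≥0∞} (hf : Measurable f) (hg : Measurable g) (hh : Measurable h)
    (hfg : ∀ x y, f x ^ a * g y ^ b ≤ h (a * x + b * y)) :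
    (∫⁻ x, f x) ^ a * (∫⁻ x, g x) ^ b ≤ ∫⁻ x, h x := by
  have tendsto_truncation {u : ℝ → ℝ≥0∞} (hu : Measurable u) (c : ℝ) :
      Tendsto (fun n : ℕ => (∫⁻ x, min (u x) n) ^ c) atTop (𝓝 ((∫⁻ x, u x) ^ c)) := by
    refine (ENNReal.continuous_rpow_const.tendsto _).comp ?_
    refine lintegral_tendsto_of_tendsto_of_monotone (fun n => by fun_prop)
      (.of_forall fun x m n hmn => by dsimp; gcongr) (.of_forall fun x => ?_)
    simpa using (tendsto_const_nhds (x := u x)).min ENNReal.tendsto_nat_nhds_top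
  rcases eq_or_ne (∫⁻ x, f x) 0 with hf₀ | hf₀
  · simp [hf₀, ha]
  rcases eq_or_ne (∫⁻ x, g x) 0 with hg₀ | hg₀
  · simp [hg₀, hb]
  have tendsto_product := ENNReal.Tendsto.mul (tendsto_truncation hf a)
    (.inl (by simp [hf₀, ha.le])) (tendsto_truncation hg b) (.inl (by simp [hg₀, hb.le]))
  refine le_of_tendsto' tendsto_product fun n => ?_
  refine prekopa_leindler_real_of_le ha hb hab (by fun_prop) (by fun_prop) hh
    (ENNReal.natCast_ne_top n) (fun x => min_le_right _ _) (fun x => min_le_right _ _)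
    fun x y => le_trans ?_ (hfg x y)
  gcongr <;> exact min_le_left _ _

end PrekopaLeindler

/-- A multiplicative form of Maurey's property (τ): `k` plays the role of `exp (-w)` for a cost
function `w`, and the exponents `a`, `b` are the weights of the two test functions. -/
def HasPropertyTau {X : Type*} [MeasurableSpace X] (μ : Measure X) (k : X → X → ℝ≥0∞)
    (a b : ℝ) : Prop :=
  ∀ ⦃f g : X → ℝ≥0∞⦄, Measurable f → Measurable g →
    (∀ x y, f x ^ a * g y ^ b * k x y ≤ 1) → (∫⁻ x, f x ∂μ) ^ a * (∫⁻ y, g y ∂μ) ^ b ≤ 1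

namespace HasPropertyTau

variable {X Y : Type*} [MeasurableSpace X] [MeasurableSpace Y] {a b : ℝ}

theorem map {μ : Measure X} {T : X → Y} (hT : Measurable T) {k : Y → Y → ℝ≥0∞}
    (hμ : HasPropertyTau μ (fun x y => k (T x) (T y)) a b) : HasPropertyTau (μ.map T) k a b := by
  intro f g hf hg hfg
  rw [lintegral_map hf hT, lintegral_map hg hT]
  exact hμ (hf.comp hT) (hg.comp hT) fun x y => hfg (T x) (T y)

theorem prod (hb : 0 < b) {μ : Measure X} {ν : Measure Y} [SFinite ν]
    {k : X → X → ℝ≥0∞} {l : Y → Y → ℝ≥0∞} (hμ : HasPropertyTau μ k a b)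
    (hν : HasPropertyTau ν l a b) :
    HasPropertyTau (μ.prod ν) (fun p q => k p.1 q.1 * l p.2 q.2) a b := by
  intro f g hf hg hfg
  rw [lintegral_prod _ hf.aemeasurable, lintegral_prod _ hg.aemeasurable]
  refine hμ hf.lintegral_prod_right' hg.lintegral_prod_right' fun x x' => ?_
  have rpow_inv_rpow : (k x x' ^ b⁻¹) ^ b = k x x' := ENNReal.rpow_inv_rpow hb.ne' _
  have hgx' : Measurable fun y => g (x', y) := hg.comp measurable_prodMk_left
  -- In the fibre over `(x, x')`, the factor `k x x'` is absorbed into the second test function.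
  have fiber := hν (f := fun y => f (x, y)) (g := fun y => g (x', y) * k x x' ^ b⁻¹)
    (hf.comp measurable_prodMk_left) (hgx'.mul_const _) fun y y' => by
      rw [ENNReal.mul_rpow_of_nonneg _ _ hb.le, rpow_inv_rpow]
      simpa only [mul_assoc] using hfg (x, y) (x', y')
  rwa [lintegral_mul_const _ hgx', ENNReal.mul_rpow_of_nonneg _ _ hb.le, rpow_inv_rpow,
    ← mul_assoc] at fiber

theorem pi (hb : 0 < b) {n : ℕ} {Z : Fin n → Type*} [∀ i, MeasurableSpace (Z i)]
    {μ : ∀ i, Measure (Z i)} [∀ i, IsProbabilityMeasure (μ i)] {k : ∀ i, Z i → Z i → ℝ≥0∞}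
    (hμ : ∀ i, HasPropertyTau (μ i) (k i) a b) :
    HasPropertyTau (Measure.pi μ) (fun x y => ∏ i, k i (x i) (y i)) a b := by
  induction n with
  | zero =>
    intro f g _ _ hfg
    rw [Measure.pi_of_empty μ isEmptyElim, lintegral_dirac, lintegral_dirac]
    simpa using hfg isEmptyElim isEmptyElim
  | succ n ih =>
    rw [← (measurePreserving_piFinSuccAbove μ 0).symm.map_eq]
    refine map (MeasurableEquiv.measurable _) ?_
    simp only [Fin.prod_univ_succ]
    exact (hμ 0).prod hb (ih fun i => hμ i.succ)

end HasPropertyTau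

theorem hasPropertyTau_withDensity {a b : ℝ} (ha : 0 < a) (hb : 0 < b) (hab : a + b = 1)
    {ρ : ℝ → ℝ≥0∞} (hρ : Measurable ρ) (hρ_le : ∫⁻ x, ρ x ≤ 1) {k : ℝ → ℝ → ℝ≥0∞}
    (hk : ∀ x y, ρ x ^ a * ρ y ^ b ≤ ρ (a * x + b * y) * k x y) :
    HasPropertyTau (volume.withDensity ρ) k a b := by
  intro f g hf hg hfg
  rw [lintegral_withDensity_eq_lintegral_mul _ hρ hf,
    lintegral_withDensity_eq_lintegral_mul _ hρ hg]
  refine (prekopa_leindler_real ha hb hab (hρ.mul hf) (hρ.mul hg) hρ fun x y => ?_).trans hρ_le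
  calc (ρ x * f x) ^ a * (ρ y * g y) ^ b = ρ x ^ a * ρ y ^ b * (f x ^ a * g y ^ b) := by
        rw [ENNReal.mul_rpow_of_nonneg _ _ ha.le, ENNReal.mul_rpow_of_nonneg _ _ hb.le,
          mul_mul_mul_comm]
    _ ≤ ρ (a * x + b * y) * k x y * (f x ^ a * g y ^ b) :=
        mul_le_mul' (hk x y) le_rfl
    _ = ρ (a * x + b * y) * (f x ^ a * g y ^ b * k x y) := by ring
    _ ≤ ρ (a * x + b * y) := mul_le_of_le_one_right' (hfg x y)

/-- The Gaussian kernel `exp (-c d(x, y)²)`, i.e. the quadratic cost `c d²` in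
multiplicative form. -/
noncomputable def gaussianKernel {X : Type*} [PseudoMetricSpace X] (c : ℝ) (x y : X) : ℝ≥0∞ :=
  ENNReal.ofReal (Real.exp (-(c * dist x y ^ 2)))

theorem gaussianPDFReal_rpow_mul_rpow {a b : ℝ} (hab : a + b = 1) (m : ℝ) (v : ℝ≥0) (x y : ℝ) :
    gaussianPDFReal m v x ^ a * gaussianPDFReal m v y ^ b =
      gaussianPDFReal m v (a * x + b * y) * Real.exp (-(a * b / (2 * v) * (x - y) ^ 2)) := by
  simp only [gaussianPDFReal]
  set c := (√(2 * Real.pi * v))⁻¹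
  have hc : 0 ≤ c := by positivity
  rw [Real.mul_rpow hc (Real.exp_pos _).le, Real.mul_rpow hc (Real.exp_pos _).le,
    ← Real.exp_mul, ← Real.exp_mul, mul_mul_mul_comm, ← Real.rpow_add' hc (by simp [hab]), hab,
    Real.rpow_one, ← Real.exp_add, mul_assoc, ← Real.exp_add]
  obtain rfl : b = 1 - a := by linarith
  congr 2
  ring

theorem gaussianPDF_rpow_mul_rpow {a b : ℝ} (ha : 0 ≤ a) (hb : 0 ≤ b) (hab : a + b = 1) (m : ℝ)
    (v : ℝ≥0) (x y : ℝ) :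
    gaussianPDF m v x ^ a * gaussianPDF m v y ^ b =
      gaussianPDF m v (a * x + b * y) * gaussianKernel (a * b / (2 * v)) x y := by
  have pdf_nonneg := gaussianPDFReal_nonneg m v
  simp only [gaussianPDF, gaussianKernel, Real.dist_eq, sq_abs]
  rw [ENNReal.ofReal_rpow_of_nonneg (pdf_nonneg _) ha,
    ENNReal.ofReal_rpow_of_nonneg (pdf_nonneg _) hb,
    ← ENNReal.ofReal_mul (Real.rpow_nonneg (pdf_nonneg _) _), ← ENNReal.ofReal_mul (pdf_nonneg _),
    gaussianPDFReal_rpow_mul_rpow hab]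

theorem hasPropertyTau_gaussianReal {a b : ℝ} (ha : 0 < a) (hb : 0 < b) (hab : a + b = 1) (m : ℝ)
    {v : ℝ≥0} (hv : v ≠ 0) :
    HasPropertyTau (gaussianReal m v) (gaussianKernel (a * b / (2 * v))) a b := by
  rw [gaussianReal_of_var_ne_zero _ hv]
  exact hasPropertyTau_withDensity ha hb hab (measurable_gaussianPDF m v)
    (lintegral_gaussianPDF_eq_one m hv).le
    fun x y => (gaussianPDF_rpow_mul_rpow ha.le hb.le hab m v x y).le

theorem prod_gaussianKernel_eq_gaussianKernel_sum {E ι : Type*} [NormedAddCommGroup E]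
    [InnerProductSpace ℝ E] [Fintype ι] (e : OrthonormalBasis ι ℝ E) (c : ℝ) (x y : ι → ℝ) :
    ∏ i, gaussianKernel c (x i) (y i) = gaussianKernel c (∑ i, x i • e i) (∑ i, y i • e i) := by
  have dist_sq : dist (∑ i, x i • e i) (∑ i, y i • e i) ^ 2 = ∑ i, dist (x i) (y i) ^ 2 := by
    simp only [dist_eq_norm, ← Finset.sum_sub_distrib, ← sub_smul, Real.norm_eq_abs, sq_abs]
    rw [← e.sum_sq_inner_right]
    simp [e.orthonormal.inner_right_fintype]
  simp only [gaussianKernel, dist_sq, Finset.mul_sum, ← Finset.sum_neg_distrib, Real.exp_sum]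
  exact (ENNReal.ofReal_prod_of_nonneg fun _ _ => (Real.exp_pos _).le).symm

theorem hasPropertyTau_stdGaussian {E : Type*} [NormedAddCommGroup E] [InnerProductSpace ℝ E]
    [FiniteDimensional ℝ E] [MeasurableSpace E] [BorelSpace E] {a b : ℝ} (ha : 0 < a) (hb : 0 < b)
    (hab : a + b = 1) : HasPropertyTau (stdGaussian E) (gaussianKernel (a * b / 2)) a b := by
  refine HasPropertyTau.map (by fun_prop) ?_
  simp only [← prod_gaussianKernel_eq_gaussianKernel_sum]
  exact .pi hb fun _ => by simpa using hasPropertyTau_gaussianReal ha hb hab 0 one_ne_zero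

section Integrability

theorem integrable_comp_of_lipschitzWith {X E F : Type*} [MeasurableSpace X]
    [NormedAddCommGroup E] [NormedAddCommGroup F] {μ : Measure X} [IsFiniteMeasure μ] {f : X → E}
    {V : E → F} {K : ℝ≥0} (hV : LipschitzWith K V) (hf : Integrable f μ) :
    Integrable (fun x => V (f x)) μ := by
  have centered : MemLp ((fun z => V z - V 0) ∘ f) 1 μ :=
    LipschitzWith.comp_memLp (by simpa using hV.sub (.const (V 0))) (sub_self _)
      (memLp_one_iff_integrable.2 hf)
  exact ((memLp_one_iff_integrable.1 centered).add (integrable_const (V 0))).congr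
    (.of_forall fun x => sub_add_cancel (V (f x)) (V 0))

variable {X : Type*} [MeasurableSpace X] {μ : Measure X} {V : X → ℝ}

theorem integrable_exp_of_lintegral_ne_top (hV : AEStronglyMeasurable V μ)
    (h : ∫⁻ x, ENNReal.ofReal (Real.exp (V x)) ∂μ ≠ ∞) :
    Integrable (fun x => Real.exp (V x)) μ :=
  (lintegral_ofReal_ne_top_iff_integrable (Real.continuous_exp.comp_aestronglyMeasurable hV)
    (.of_forall fun _ => (Real.exp_pos _).le)).1 h

theorem ofReal_exp_integral_le_lintegral [IsProbabilityMeasure μ] (hV : Integrable V μ) :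
    ENNReal.ofReal (Real.exp (∫ x, V x ∂μ)) ≤ ∫⁻ x, ENNReal.ofReal (Real.exp (V x)) ∂μ := by
  by_cases htop : ∫⁻ x, ENNReal.ofReal (Real.exp (V x)) ∂μ = ∞
  · exact htop ▸ le_top
  have hexp := integrable_exp_of_lintegral_ne_top hV.aestronglyMeasurable htop
  rw [← ofReal_integral_eq_lintegral_ofReal hexp (.of_forall fun _ => (Real.exp_pos _).le)]
  exact ENNReal.ofReal_le_ofReal <| convexOn_exp.map_integral_le
    Real.continuous_exp.continuousOn isClosed_univ (by simp) hV hexp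

theorem hasSubgaussianMGF_of_forall_lintegral_le {c : ℝ≥0} (hV : AEStronglyMeasurable V μ)
    (h : ∀ l : ℝ, ∫⁻ x, ENNReal.ofReal (Real.exp (l * V x)) ∂μ ≤
      ENNReal.ofReal (Real.exp (c * l ^ 2 / 2))) : HasSubgaussianMGF V c μ := by
  have hint (l : ℝ) : Integrable (fun x => Real.exp (l * V x)) μ :=
    integrable_exp_of_lintegral_ne_top (hV.const_mul l) (ne_top_of_le_ne_top (by simp) (h l))
  refine ⟨hint, fun l => ?_⟩
  rw [mgf, ← ENNReal.ofReal_le_ofReal_iff (Real.exp_pos _).le,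
    ofReal_integral_eq_lintegral_ofReal (hint l) (.of_forall fun _ => (Real.exp_pos _).le)]
  exact h l

end Integrability

section Concentration

variable {X : Type*} [PseudoMetricSpace X] [MeasurableSpace X] [OpensMeasurableSpace X]
  {μ : Measure X} {V : X → ℝ} {K : ℝ≥0}

theorem HasPropertyTau.lintegral_exp_rpow_mul_rpow_le_one {a b : ℝ} (ha : 0 < a) (hb : 0 ≤ b)
    (hμ : HasPropertyTau μ (gaussianKernel (a * b / 2)) a b) (hV : LipschitzWith K V) (l : ℝ) :
    (∫⁻ x, ENNReal.ofReal (Real.exp (-(b / a * l) * V x)) ∂μ) ^ a *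
      (∫⁻ x, ENNReal.ofReal (Real.exp (l * V x - K ^ 2 * l ^ 2 / (2 * a))) ∂μ) ^ b ≤ 1 := by
  have hV_meas : Measurable V := hV.continuous.measurable
  refine hμ (by fun_prop) (by fun_prop) fun x y => ?_
  have increment_le : |l * (V y - V x)| ≤ |l| * (K * dist x y) := by
    rw [abs_mul, ← Real.dist_eq, dist_comm]
    gcongr
    exact hV.dist_le_mul x y
  have exponent_nonpos : -(b / a * l) * V x * a + (l * V y - K ^ 2 * l ^ 2 / (2 * a)) * b +
      -(a * b / 2 * dist x y ^ 2) ≤ 0 :=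
    calc _ = b * (l * (V y - V x) - |l| * (K * dist x y)) -
            b * (|l| * K - a * dist x y) ^ 2 / (2 * a) := by
          rw [← sq_abs l]
          field_simp
          ring
      _ ≤ 0 := by
          refine sub_nonpos_of_le (le_trans (b := 0) ?_ (by positivity))
          exact mul_nonpos_of_nonneg_of_nonpos hb
            (sub_nonpos.2 ((le_abs_self _).trans increment_le))
  simp only [gaussianKernel]
  rw [ENNReal.ofReal_rpow_of_pos (Real.exp_pos _), ENNReal.ofReal_rpow_of_pos (Real.exp_pos _),
    ← Real.exp_mul, ← Real.exp_mul, ← ENNReal.ofReal_mul (Real.exp_pos _).le, ← Real.exp_add,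
    ← ENNReal.ofReal_mul (Real.exp_pos _).le, ← Real.exp_add, ENNReal.ofReal_le_one,
    Real.exp_le_one_iff]
  exact exponent_nonpos

variable [IsProbabilityMeasure μ]

theorem HasPropertyTau.lintegral_exp_le {a b : ℝ} (ha : 0 < a) (hb : 0 < b)
    (hμ : HasPropertyTau μ (gaussianKernel (a * b / 2)) a b) (hV : LipschitzWith K V)
    (hV_int : Integrable V μ) (l : ℝ) :
    ∫⁻ x, ENNReal.ofReal (Real.exp (l * (V x - ∫ y, V y ∂μ))) ∂μ ≤
      ENNReal.ofReal (Real.exp (K ^ 2 * l ^ 2 / (2 * a))) := by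
  set W : X → ℝ := fun x => V x - ∫ y, V y ∂μ with W_def
  have hW : LipschitzWith K W := by simpa using hV.sub (.const (∫ y, V y ∂μ))
  have hW_int : Integrable W μ := hV_int.sub (integrable_const _)
  have hW_mean : ∫ x, W x ∂μ = 0 := by simp [W_def, integral_sub hV_int (integrable_const _)]
  set c := K ^ 2 * l ^ 2 / (2 * a)
  have one_le : 1 ≤ ∫⁻ x, ENNReal.ofReal (Real.exp (-(b / a * l) * W x)) ∂μ := by
    have jensen := ofReal_exp_integral_le_lintegral (hW_int.const_mul (-(b / a * l)))
    rwa [integral_const_mul, hW_mean, mul_zero, Real.exp_zero, ENNReal.ofReal_one] at jensen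
  have shifted_rpow_le_one :
      (∫⁻ x, ENNReal.ofReal (Real.exp (l * W x - c)) ∂μ) ^ b ≤ 1 ^ b := by
    rw [ENNReal.one_rpow]
    exact (le_mul_of_one_le_left' (ENNReal.one_le_rpow one_le ha)).trans
      (hμ.lintegral_exp_rpow_mul_rpow_le_one ha hb.le hW l)
  have shifted_le_one := (ENNReal.rpow_le_rpow_iff hb).1 shifted_rpow_le_one
  calc ∫⁻ x, ENNReal.ofReal (Real.exp (l * W x)) ∂μ
      = ENNReal.ofReal (Real.exp c) * ∫⁻ x, ENNReal.ofReal (Real.exp (l * W x - c)) ∂μ := by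
        rw [← lintegral_const_mul' _ _ ENNReal.ofReal_ne_top]
        simp [← ENNReal.ofReal_mul, (Real.exp_pos _).le, ← Real.exp_add]
    _ ≤ ENNReal.ofReal (Real.exp c) := mul_le_of_le_one_right' shifted_le_one

theorem hasSubgaussianMGF_of_forall_hasPropertyTau
    (hμ : ∀ a ∈ Ioo (0 : ℝ) 1,
      HasPropertyTau μ (gaussianKernel (a * (1 - a) / 2)) a (1 - a))
    (hV : LipschitzWith K V) (hV_int : Integrable V μ) :
    HasSubgaussianMGF (fun x => V x - ∫ y, V y ∂μ) (K ^ 2) μ := by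
  refine hasSubgaussianMGF_of_forall_lintegral_le (hV_int.sub (integrable_const _)).1 fun l => ?_
  have tendsto_bound : Tendsto (fun a : ℝ => ENNReal.ofReal (Real.exp (K ^ 2 * l ^ 2 / (2 * a))))
      (𝓝[<] 1) (𝓝 (ENNReal.ofReal (Real.exp (K ^ 2 * l ^ 2 / (2 * 1))))) := by
    refine ENNReal.tendsto_ofReal ((ContinuousAt.tendsto ?_).mono_left nhdsWithin_le_nhds)
    fun_prop (disch := norm_num)
  rw [mul_one] at tendsto_bound
  refine ge_of_tendsto tendsto_bound ?_
  filter_upwards [Ioo_mem_nhdsLT (zero_lt_one' ℝ)] with a ha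
  exact (hμ a ha).lintegral_exp_le ha.1 (sub_pos.2 ha.2) hV hV_int l

end Concentration

theorem hasSubgaussianMGF_stdGaussian {E : Type*} [NormedAddCommGroup E]
    [InnerProductSpace ℝ E] [FiniteDimensional ℝ E] [MeasurableSpace E] [BorelSpace E]
    {V : E → ℝ} {K : ℝ≥0} (hV : LipschitzWith K V) :
    HasSubgaussianMGF (fun x => V x - ∫ y, V y ∂stdGaussian E) (K ^ 2) (stdGaussian E) :=
  hasSubgaussianMGF_of_forall_hasPropertyTau
    (fun _ ha => hasPropertyTau_stdGaussian ha.1 (sub_pos.2 ha.2) (add_sub_cancel _ _)) hV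
    (integrable_comp_of_lipschitzWith hV IsGaussian.integrable_id)

theorem stmt_9_general {E : Type*} [NormedAddCommGroup E] [InnerProductSpace ℝ E]
    [FiniteDimensional ℝ E] [MeasurableSpace E] [BorelSpace E] {V : E → ℝ} {K : ℝ≥0} (hK : K ≠ 0)
    (hV : LipschitzWith K V) {t : ℝ} (ht : 0 ≤ t) :
    stdGaussian E {z | ∫ w, V w ∂stdGaussian E + K * t ≤ V z} ≤
      ENNReal.ofReal (Real.exp (-t ^ 2 / 2)) := by
  have hKt : 0 ≤ K * t := by positivity
  have chernoff := (hasSubgaussianMGF_stdGaussian hV).measure_ge_le hKt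
  have exponent_eq : -(K * t) ^ 2 / (2 * (K ^ 2 : ℝ≥0)) = -t ^ 2 / 2 := by
    push_cast
    field_simp
  simp only [exponent_eq, le_sub_iff_add_le'] at chernoff
  rw [← ofReal_measureReal]
  exact ENNReal.ofReal_le_ofReal chernoff

/-- Gaussian concentration for Lipschitz functions: if `V : ℝ^n → ℝ` is 1-Lipschitz and `Z`
is a standard Gaussian vector in `ℝ^n`, then `P(V(Z) ≥ E[V(Z)] + t) ≤ exp(−t²/2)` for
every `t ≥ 0`. -/
theorem stmt_9 {n : ℕ} (V : EuclideanSpace ℝ (Fin n) → ℝ) (hV : LipschitzWith 1 V)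
    (μ : Measure (EuclideanSpace ℝ (Fin n)))
    (hμ : μ = Measure.map (WithLp.equiv 2 (Fin n → ℝ)).symm
      (Measure.pi fun _ : Fin n => gaussianReal 0 1))
    (t : ℝ) (ht : 0 ≤ t) :
    μ {z | ∫ w, V w ∂μ + t ≤ V z} ≤ ENNReal.ofReal (Real.exp (-t ^ 2 / 2)) := by
  obtain rfl : μ = stdGaussian _ := hμ.trans map_pi_eq_stdGaussian
  simpa using stmt_9_general one_ne_zero hV ht
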